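/- Let d_1, d_2 be positive integers, let A_1, A_2 > 0, let S(q) = A_1 e^{−q_2} − A_2 e^{q_1 − 2q_2}, and let H be the associated Ricci-flat cohomogeneity one Hamiltonian on ℝ²×ℝ². Then there do not exist C¹ functions F_1, F_2, F_0 on ℝ², with F_1 and F_2 not both identically zero, such that F(q,p) := F_1(q)p_1 + F_2(q)p_2 + F_0(q) satisfies {F,H} = 0 at every point of V_H. -/

import Mathlib

/-- Partial derivative in the `i`-th `q`-coordinate. -/
noncomputable def pderivQ (F : (Fin 2 → ℝ) → (Fin 2 → ℝ) → ℝ) (i : Fin 2)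
    (q p : Fin 2 → ℝ) : ℝ :=
  deriv (fun t => F (Function.update q i t) p) (q i)

/-- Partial derivative in the `i`-th `p`-coordinate. -/
noncomputable def pderivP (F : (Fin 2 → ℝ) → (Fin 2 → ℝ) → ℝ) (i : Fin 2)
    (q p : Fin 2 → ℝ) : ℝ :=
  deriv (fun t => F q (Function.update p i t)) (p i)

/-- Canonical Poisson bracket on `ℝ² × ℝ²`. -/
noncomputable def poisson (F G : (Fin 2 → ℝ) → (Fin 2 → ℝ) → ℝ) (q p : Fin 2 → ℝ) : ℝ :=
  ∑ i : Fin 2, (pderivQ F i q p * pderivP G i q p - pderivP F i q p * pderivQ G i q p)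

/-- Relative volume `v(q) = exp((d₁q₁ + d₂q₂)/2)`. -/
noncomputable def vol (d1 d2 : ℕ) (q : Fin 2 → ℝ) : ℝ :=
  Real.exp (((d1 : ℝ) * q 0 + (d2 : ℝ) * q 1) / 2)

/-- The quadratic form `J(p) = (p₁+p₂)²/(n−1) − p₁²/d₁ − p₂²/d₂`, `n = d₁+d₂`. -/
noncomputable def Jform (d1 d2 : ℕ) (p : Fin 2 → ℝ) : ℝ :=
  (1 / ((d1 : ℝ) + (d2 : ℝ) - 1)) * (p 0 + p 1) ^ 2 - (p 0) ^ 2 / (d1 : ℝ) -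
    (p 1) ^ 2 / (d2 : ℝ)

/-- The Ricci-flat cohomogeneity one Hamiltonian `H(q,p) = v(q)⁻¹ J(p) − S(q) v(q)`. -/
noncomputable def Ham (d1 d2 : ℕ) (S : (Fin 2 → ℝ) → ℝ) (q p : Fin 2 → ℝ) : ℝ :=
  (vol d1 d2 q)⁻¹ * Jform d1 d2 p - S q * vol d1 d2 q

/-!
Being conserved on `V_H` is unaffected by rescaling `H` by a nonvanishing function of `q`, so `H`
may be replaced by `J(p) - W(q)` with `W = v² S`. The form `J` is a product of two linear forms
`X ⬝ᵥ p` and `Y ⬝ᵥ p`. In the corresponding null coordinates, `q = x X + y Y`, the vector field of a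
linear first integral has components `f(x)` and `g(y)`, and `W (f, g)` is divergence free. Since
`W = A e^{ax + by} + B e^{a'x + b'y}`, separating variables in this divergence equation forces
`f' + a f` and `f' + a' f` (and likewise for `g`) to be constants plus exponentials, and comparing
coefficients for the exponents at hand leaves only `f = g = 0`.
-/

section LineDerivatives

variable {E F : Type*} [NormedAddCommGroup E] [NormedSpace ℝ E] [NormedAddCommGroup F]
  [NormedSpace ℝ F] {f : E → F} {w : E}

lemma apply_add_smul_of_fderiv_eq_zero (hf : Differentiable ℝ f) (hw : ∀ q, fderiv ℝ f q w = 0)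
    (q : E) (t : ℝ) : f (q + t • w) = f q := by
  have hline (t : ℝ) : HasDerivAt (fun t : ℝ => f (q + t • w)) 0 t := by
    rw [← hw (q + t • w)]
    refine (hf _).hasFDerivAt.comp_hasDerivAt t ?_
    simpa using ((hasDerivAt_id t).smul_const w).const_add q
  simpa using is_const_of_deriv_eq_zero (fun t => (hline t).differentiableAt)
    (fun t => (hline t).deriv) t 0

lemma hasDerivAt_comp_smul_of_fderiv_eq_zero (hf : Differentiable ℝ f)
    (hw : ∀ q, fderiv ℝ f q w = 0) (v : E) (x y : ℝ) :
    HasDerivAt (fun x : ℝ => f (x • v)) (fderiv ℝ f (x • v + y • w) v) x := by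
  have hline : HasDerivAt (fun x : ℝ => x • v + y • w) v x := by
    simpa using ((hasDerivAt_id x).smul_const v).add_const (y • w)
  have h := (hf (x • v + y • w)).hasFDerivAt.comp_hasDerivAt x hline
  simpa only [Function.comp_def, apply_add_smul_of_fderiv_eq_zero hf hw] using h

end LineDerivatives

section ExponentialEquations

open Real

lemma exists_exp_mul_eq {c s : ℝ} (hc : c ≠ 0) (hs : 0 < s) : ∃ x, exp (c * x) = s :=
  ⟨log s / c, by rw [mul_div_cancel₀ _ hc, exp_log hs]⟩

lemma laurent_exp_coeff_eq_zero {c r₀ r₁ r₂ : ℝ} (hc : c ≠ 0)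
    (h : ∀ x, r₀ + r₁ * exp (c * x) + r₂ * exp (-(c * x)) = 0) :
    r₀ = 0 ∧ r₁ = 0 ∧ r₂ = 0 := by
  have hpos (s : ℝ) (hs : 0 < s) : r₀ + r₁ * s + r₂ * s⁻¹ = 0 := by
    obtain ⟨x, rfl⟩ := exists_exp_mul_eq hc hs
    simpa only [exp_neg] using h x
  have h1 := hpos 1 one_pos
  have h2 := hpos 2 two_pos
  have h4 := hpos 4 four_pos
  norm_num at h1 h2 h4
  refine ⟨?_, ?_, ?_⟩ <;> linarith

lemma bilinear_exp_coeff_eq_zero {c e r₀ r₁ r₂ r₃ : ℝ} (hc : c ≠ 0) (he : e ≠ 0)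
    (h : ∀ x y, r₀ + r₁ * exp (c * x) + r₂ * exp (e * y) + r₃ * (exp (c * x) * exp (e * y)) = 0) :
    r₀ = 0 ∧ r₁ = 0 ∧ r₂ = 0 ∧ r₃ = 0 := by
  have hpos (s t : ℝ) (hs : 0 < s) (ht : 0 < t) : r₀ + r₁ * s + r₂ * t + r₃ * (s * t) = 0 := by
    obtain ⟨x, rfl⟩ := exists_exp_mul_eq hc hs
    obtain ⟨y, rfl⟩ := exists_exp_mul_eq he ht
    exact h x y
  have h11 := hpos 1 1 one_pos one_pos
  have h12 := hpos 1 2 one_pos two_pos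
  have h21 := hpos 2 1 two_pos one_pos
  have h22 := hpos 2 2 two_pos two_pos
  refine ⟨?_, ?_, ?_, ?_⟩ <;> linarith

lemma exists_eq_add_mul_of_add_eq_add_mul_mul {ι κ R : Type*} [Field R] {u u' P : ι → R}
    {w w' Q : κ → R} {y₀ y₁ : κ} (hQ : Q y₀ ≠ Q y₁)
    (h : ∀ x y, u x + w y = (u' x + w' y) * (P x * Q y)) :
    ∃ m M, ∀ x, u x = m + M * P x := by
  have hQ' : Q y₀ - Q y₁ ≠ 0 := sub_ne_zero.mpr hQ
  refine ⟨(w y₀ * Q y₁ - w y₁ * Q y₀) / (Q y₀ - Q y₁),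
    (w' y₁ - w' y₀) * Q y₀ * Q y₁ / (Q y₀ - Q y₁), fun x => ?_⟩
  field_simp
  linear_combination Q y₀ * h x y₁ - Q y₁ * h x y₀

lemma exists_exp_forms_of_separated {u w u' w' : ℝ → ℝ} {C c e : ℝ} (hC : C ≠ 0) (hc : c ≠ 0)
    (he : e ≠ 0)
    (h : ∀ x y, u x + w y = C * (u' x + w' y) * (exp (c * x) * exp (e * y))) :
    ∃ m k K L, (∀ x, u x = m + C * L * exp (c * x)) ∧ (∀ y, w y = -m + C * K * exp (e * y)) ∧
      (∀ x, u' x = k + K * exp (-(c * x))) ∧ ∀ y, w' y = -k + L * exp (-(e * y)) := by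
  have h' (x y : ℝ) :
      u' x + w' y = (C⁻¹ * u x + C⁻¹ * w y) * (exp (-(c * x)) * exp (-(e * y))) := by
    rw [exp_neg, exp_neg]
    field_simp
    linear_combination -h x y
  have hne {r : ℝ} (hr : r ≠ 0) : exp (r * 0) ≠ exp (r * 1) := by
    simpa [@eq_comm _ (1 : ℝ)] using hr
  have hne' {r : ℝ} (hr : r ≠ 0) : exp (-(r * 0)) ≠ exp (-(r * 1)) := by
    simpa [@eq_comm _ (1 : ℝ)] using hr
  obtain ⟨m, M, hu⟩ := exists_eq_add_mul_of_add_eq_add_mul_mul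
    (u := u) (u' := fun x => C * u' x) (P := fun x => exp (c * x))
    (w := w) (w' := fun y => C * w' y) (Q := fun y => exp (e * y)) (hne he)
    fun x y => by linear_combination h x y
  obtain ⟨n, N, hw⟩ := exists_eq_add_mul_of_add_eq_add_mul_mul
    (u := w) (u' := fun y => C * w' y) (P := fun y => exp (e * y))
    (w := u) (w' := fun x => C * u' x) (Q := fun x => exp (c * x)) (hne hc)
    fun y x => by linear_combination h x y
  obtain ⟨k, K, hu'⟩ := exists_eq_add_mul_of_add_eq_add_mul_mul
    (Q := fun y => exp (-(e * y))) (hne' he) h'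
  obtain ⟨l, L, hw'⟩ := exists_eq_add_mul_of_add_eq_add_mul_mul
    (u := w') (u' := fun y => C⁻¹ * w y) (P := fun y => exp (-(e * y)))
    (w := u') (w' := fun x => C⁻¹ * u x) (Q := fun x => exp (-(c * x))) (hne' hc)
    fun y x => by linear_combination h' x y
  obtain ⟨hmn, hM, hN, hkl⟩ := bilinear_exp_coeff_eq_zero (r₀ := m + n) (r₁ := M - C * L)
    (r₂ := N - C * K) (r₃ := -(C * (k + l))) hc he fun x y => by
      have hxy := h x y
      rw [hu, hw, hu', hw', exp_neg, exp_neg] at hxy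
      field_simp at hxy
      linear_combination hxy
  have hkl : k + l = 0 := by simpa [hC] using hkl
  obtain rfl : n = -m := by linarith
  obtain rfl : l = -k := by linarith
  obtain rfl : M = C * L := by linarith
  obtain rfl : N = C * K := by linarith
  exact ⟨m, k, K, L, hu, hw, hu', hw'⟩

lemma coeff_of_deriv_add_mul_eq_exp {f : ℝ → ℝ} (hf : Differentiable ℝ f) {a a' m M k K : ℝ}
    (ha : a ≠ a')
    (h : ∀ x, deriv f x + a * f x = m + M * exp ((a' - a) * x))
    (h' : ∀ x, deriv f x + a' * f x = k + K * exp (-((a' - a) * x))) :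
    M * (a - 2 * a') = 0 ∧ K * (a' - 2 * a) = 0 ∧ a' * m = a * k := by
  obtain ⟨c, rfl⟩ : ∃ c, a' = a + c := ⟨a' - a, by ring⟩
  have hc : c ≠ 0 := by simpa using ha
  simp only [add_sub_cancel_left] at h h'
  have hform : (fun x => c * f x) = fun x => k - m + K * exp (-(c * x)) - M * exp (c * x) :=
    funext fun x => by linear_combination h' x - h x
  have hder (x : ℝ) : c * deriv f x = K * (exp (-(c * x)) * -c) - M * (exp (c * x) * c) := by
    have hlin : HasDerivAt (fun x : ℝ => c * x) c x := by
      simpa using (hasDerivAt_id x).const_mul c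
    refine HasDerivAt.unique ((hf x).hasDerivAt.const_mul c) ?_
    rw [hform]
    exact ((hlin.fun_neg.exp.const_mul K).const_add (k - m)).sub (hlin.exp.const_mul M)
  obtain ⟨h₀, h₁, h₂⟩ := laurent_exp_coeff_eq_zero
    (r₀ := a * k - (a + c) * m) (r₁ := M * (a - 2 * (a + c))) (r₂ := -(K * (a + c - 2 * a))) hc
    fun x => by linear_combination c * h x - hder x - a * congrFun hform x
  exact ⟨h₁, neg_eq_zero.mp h₂, by linarith⟩

/-- Genericity of two exponents `(a, b)` and `(a', b')` in null coordinates under which,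
for `W = A e^{ax+by} + B e^{a'x+b'y}` with `A, B ≠ 0`, no nonzero conformal vector field
`(f(x), g(y))` satisfies `div (W (f, g)) = 0`. The conditions `not_fst_double` and `not_snd_double`
exclude exponential solutions, `det_ne` excludes constant ones. -/
structure Nonresonant (a b a' b' : ℝ) : Prop where
  fst_ne : a ≠ a'
  snd_ne : b ≠ b'
  det_ne : a * b' ≠ a' * b
  not_fst_double : ¬(a' = 2 * a ∧ b = 2 * b')
  not_snd_double : ¬(b' = 2 * b ∧ a = 2 * a')

lemma Nonresonant.exp_coeff_eq_zero {a b a' b' C m k K L : ℝ} (hab : Nonresonant a b a' b')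
    (hC : C ≠ 0)
    (hL : C * L * (a - 2 * a') = 0) (hK : K * (a' - 2 * a) = 0) (hmk : a' * m = a * k)
    (hCK : C * K * (b - 2 * b') = 0) (hL' : L * (b' - 2 * b) = 0) (hmk' : b' * m = b * k) :
    m = 0 ∧ k = 0 ∧ K = 0 ∧ L = 0 := by
  have hdet : a * b' - a' * b ≠ 0 := sub_ne_zero.mpr hab.det_ne
  refine ⟨?_, ?_, ?_, ?_⟩
  · exact (mul_eq_zero_iff_left hdet).mp (by linear_combination a * hmk' - b * hmk)
  · exact (mul_eq_zero_iff_left hdet).mp (by linear_combination a' * hmk' - b' * hmk)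
  · by_contra hK0
    simp only [mul_eq_zero, hC, hK0, false_or, sub_eq_zero] at hK hCK
    exact hab.not_fst_double ⟨hK, hCK⟩
  · by_contra hL0
    simp only [mul_eq_zero, hC, hL0, false_or, sub_eq_zero] at hL hL'
    exact hab.not_snd_double ⟨hL', hL⟩

lemma Nonresonant.eq_zero_of_div_eq_zero {a b a' b' A B : ℝ} (hab : Nonresonant a b a' b')
    (hA : A ≠ 0) (hB : B ≠ 0) {f g : ℝ → ℝ} (hf : Differentiable ℝ f) (hg : Differentiable ℝ g)
    (h : ∀ x y, (deriv f x + deriv g y + a * f x + b * g y) * (A * exp (a * x + b * y)) +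
      (deriv f x + deriv g y + a' * f x + b' * g y) * (B * exp (a' * x + b' * y)) = 0) :
    f = 0 ∧ g = 0 := by
  obtain ⟨C, hC, hAC⟩ : ∃ C, C ≠ 0 ∧ A * C = -B :=
    ⟨-B / A, div_ne_zero (neg_ne_zero.mpr hB) hA, mul_div_cancel₀ _ hA⟩
  have ha : a' - a ≠ 0 := sub_ne_zero.mpr hab.fst_ne.symm
  have hb : b' - b ≠ 0 := sub_ne_zero.mpr hab.snd_ne.symm
  have hexp (x y : ℝ) : exp (a' * x + b' * y) =
      exp (a * x + b * y) * (exp ((a' - a) * x) * exp ((b' - b) * y)) := by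
    rw [← exp_add, ← exp_add]
    ring_nf
  obtain ⟨m, k, K, L, hu, hw, hu', hw'⟩ := exists_exp_forms_of_separated
    (u := fun x => deriv f x + a * f x) (w := fun y => deriv g y + b * g y)
    (u' := fun x => deriv f x + a' * f x) (w' := fun y => deriv g y + b' * g y) hC ha hb
    fun x y => by
      apply mul_left_cancel₀ (mul_ne_zero hA (exp_pos (a * x + b * y)).ne')
      linear_combination h x y - B * (deriv f x + deriv g y + a' * f x + b' * g y) * hexp x y -
        (deriv f x + deriv g y + a' * f x + b' * g y) * exp (a * x + b * y) *
          (exp ((a' - a) * x) * exp ((b' - b) * y)) * hAC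
  obtain ⟨hL, hK, hmk⟩ := coeff_of_deriv_add_mul_eq_exp hf hab.fst_ne hu hu'
  obtain ⟨hCK, hL', hmk'⟩ := coeff_of_deriv_add_mul_eq_exp hg hab.snd_ne hw hw'
  obtain ⟨rfl, rfl, rfl, rfl⟩ :=
    hab.exp_coeff_eq_zero hC hL hK hmk hCK hL' (by linear_combination -hmk')
  refine ⟨funext fun x => mul_left_cancel₀ ha ?_, funext fun y => mul_left_cancel₀ hb ?_⟩
  · simp only [Pi.zero_apply]
    linear_combination hu' x - hu x
  · simp only [Pi.zero_apply]
    linear_combination hw' y - hw y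

end ExponentialEquations

lemma quadratic_coeff_of_vanish_on_hyperbola {a b c l m e w : ℝ}
    (h : ∀ s t : ℝ, s * t = w → a * s ^ 2 + b * t ^ 2 + c * (s * t) + l * s + m * t + e = 0) :
    a = 0 ∧ b = 0 ∧ c * w + e = 0 := by
  have hs (s : ℝ) (h₀ : s ≠ 0) : a * s ^ 2 + b * (w / s) ^ 2 + c * w + e = 0 := by
    have h₁ := h s (w / s) (mul_div_cancel₀ w h₀)
    have h₂ := h (-s) (-(w / s)) (by rw [neg_mul_neg, mul_div_cancel₀ w h₀])
    rw [mul_div_cancel₀ w h₀] at h₁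
    rw [neg_mul_neg, mul_div_cancel₀ w h₀] at h₂
    linarith
  have ht (t : ℝ) (h₀ : t ≠ 0) : a * (w / t) ^ 2 + b * t ^ 2 + c * w + e = 0 := by
    have h₁ := h (w / t) t (div_mul_cancel₀ w h₀)
    have h₂ := h (-(w / t)) (-t) (by rw [neg_mul_neg, div_mul_cancel₀ w h₀])
    rw [div_mul_cancel₀ w h₀] at h₁
    rw [neg_mul_neg, div_mul_cancel₀ w h₀] at h₂
    linarith
  have hs₁ := hs 1 (by norm_num)
  have hs₂ := hs 2 (by norm_num)
  have hs₃ := hs 3 (by norm_num)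
  have ht₁ := ht 1 (by norm_num)
  have ht₂ := ht 2 (by norm_num)
  refine ⟨?_, ?_, ?_⟩ <;> linarith

section PoissonBracket

open Matrix Real

lemma hasFDerivAt_dotProduct {ι : Type*} [Fintype ι] (v q : ι → ℝ) :
    HasFDerivAt (fun q' => v ⬝ᵥ q') (LinearMap.toContinuousLinearMap (dotProductBilin ℝ ℝ v)) q :=
  (LinearMap.toContinuousLinearMap (dotProductBilin ℝ ℝ v)).hasFDerivAt

lemma hasDerivAt_dotProduct_update {ι : Type*} [Fintype ι] [DecidableEq ι] (v p : ι → ℝ) (i : ι) :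
    HasDerivAt (fun t => v ⬝ᵥ Function.update p i t) (v i) (p i) := by
  have h := (hasFDerivAt_dotProduct v _).comp_hasDerivAt _ (hasDerivAt_update p i (p i))
  simpa [Function.comp_def] using h

lemma pderivQ_eq_fderiv {F : (Fin 2 → ℝ) → (Fin 2 → ℝ) → ℝ} {q p : Fin 2 → ℝ}
    (hF : DifferentiableAt ℝ (fun q' => F q' p) q) (i : Fin 2) :
    pderivQ F i q p = fderiv ℝ (fun q' => F q' p) q (Pi.single i 1) := by
  rw [← Function.update_eq_self i q] at hF
  have h := hF.hasFDerivAt.comp_hasDerivAt (q i) (hasDerivAt_update q i (q i))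
  rw [Function.update_eq_self] at h
  exact h.deriv

lemma poisson_eq_fderiv_sub_fderiv {F G : (Fin 2 → ℝ) → (Fin 2 → ℝ) → ℝ} {q p : Fin 2 → ℝ}
    (hF : DifferentiableAt ℝ (fun q' => F q' p) q) (hG : DifferentiableAt ℝ (fun q' => G q' p) q) :
    poisson F G q p = fderiv ℝ (fun q' => F q' p) q (fun i => pderivP G i q p) -
      fderiv ℝ (fun q' => G q' p) q (fun i => pderivP F i q p) := by
  have hsum (L : (Fin 2 → ℝ) →L[ℝ] ℝ) (v : Fin 2 → ℝ) :
      ∑ i, L (Pi.single i 1) * v i = L v := by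
    conv_rhs => rw [pi_eq_sum_univ' v]
    simp only [map_sum, map_smul, smul_eq_mul, mul_comm]
  rw [← hsum, ← hsum, ← Finset.sum_sub_distrib]
  simp only [poisson, pderivQ_eq_fderiv hF, pderivQ_eq_fderiv hG, mul_comm (pderivP F _ q p)]

variable {X Y α β q p : Fin 2 → ℝ} {f g h ν W : (Fin 2 → ℝ) → ℝ} {A B : ℝ}

/-- The function on phase space, affine in the momenta, whose linear part is the vector field with
components `f` and `g` in the frame `X`, `Y`. -/
def frameMomentum (X Y : Fin 2 → ℝ) (f g h : (Fin 2 → ℝ) → ℝ) (q p : Fin 2 → ℝ) : ℝ :=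
  f q * (X ⬝ᵥ p) + g q * (Y ⬝ᵥ p) + h q

/-- The Hamiltonian with conformal factor `ν`, flat kinetic term with null vectors `X`, `Y` and
Jacobi potential `W`; for `Ham`, one has `ν = v⁻¹` and `W = v² S`. -/
def conformallyFlatHam (X Y : Fin 2 → ℝ) (ν W : (Fin 2 → ℝ) → ℝ) (q p : Fin 2 → ℝ) : ℝ :=
  ν q * ((X ⬝ᵥ p) * (Y ⬝ᵥ p) - W q)

lemma pderivP_frameMomentum (i : Fin 2) :
    pderivP (frameMomentum X Y f g h) i q p = f q * X i + g q * Y i :=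
  ((((hasDerivAt_dotProduct_update X p i).const_mul (f q)).add
    ((hasDerivAt_dotProduct_update Y p i).const_mul (g q))).add_const (h q)).deriv

lemma pderivP_conformallyFlatHam (i : Fin 2) :
    pderivP (conformallyFlatHam X Y ν W) i q p =
      ν q * (X i * (Y ⬝ᵥ p) + (X ⬝ᵥ p) * Y i) := by
  have h := (((hasDerivAt_dotProduct_update X p i).mul
    (hasDerivAt_dotProduct_update Y p i)).sub_const (W q)).const_mul (ν q)
  rw [Function.update_eq_self] at h
  exact h.deriv

lemma poisson_frameMomentum_of_level_zero (hf : DifferentiableAt ℝ f q)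
    (hg : DifferentiableAt ℝ g q) (hh : DifferentiableAt ℝ h q) (hν : DifferentiableAt ℝ ν q)
    (hW : DifferentiableAt ℝ W q) (hp : (X ⬝ᵥ p) * (Y ⬝ᵥ p) = W q) :
    poisson (frameMomentum X Y f g h) (conformallyFlatHam X Y ν W) q p =
      ν q * (fderiv ℝ f q Y * (X ⬝ᵥ p) ^ 2 + fderiv ℝ g q X * (Y ⬝ᵥ p) ^ 2 +
        (fderiv ℝ f q X + fderiv ℝ g q Y) * ((X ⬝ᵥ p) * (Y ⬝ᵥ p)) +
        fderiv ℝ h q Y * (X ⬝ᵥ p) + fderiv ℝ h q X * (Y ⬝ᵥ p) +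
        (f q * fderiv ℝ W q X + g q * fderiv ℝ W q Y)) := by
  have hlin : HasFDerivAt (fun q' => frameMomentum X Y f g h q' p)
      ((X ⬝ᵥ p) • fderiv ℝ f q + (Y ⬝ᵥ p) • fderiv ℝ g q + fderiv ℝ h q) q :=
    ((hf.hasFDerivAt.mul_const (X ⬝ᵥ p)).add (hg.hasFDerivAt.mul_const (Y ⬝ᵥ p))).add
      hh.hasFDerivAt
  have hquad : HasFDerivAt (fun q' => conformallyFlatHam X Y ν W q' p)
      (ν q • -fderiv ℝ W q + ((X ⬝ᵥ p) * (Y ⬝ᵥ p) - W q) • fderiv ℝ ν q) q :=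
    hν.hasFDerivAt.mul (hW.hasFDerivAt.const_sub ((X ⬝ᵥ p) * (Y ⬝ᵥ p)))
  have hvecP : (fun i => ν q * (X i * (Y ⬝ᵥ p) + (X ⬝ᵥ p) * Y i)) =
      ν q • ((Y ⬝ᵥ p) • X + (X ⬝ᵥ p) • Y) := by
    ext i
    simp only [Pi.smul_apply, Pi.add_apply, smul_eq_mul]
    ring
  have hvecF : (fun i => f q * X i + g q * Y i) = f q • X + g q • Y := rfl
  rw [poisson_eq_fderiv_sub_fderiv hlin.differentiableAt hquad.differentiableAt, hlin.fderiv,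
    hquad.fderiv]
  simp only [pderivP_frameMomentum, pderivP_conformallyFlatHam, hvecP, hvecF, hp, sub_self,
    zero_smul, add_zero, _root_.add_apply, _root_.smul_apply, _root_.neg_apply, map_add, map_smul,
    smul_eq_mul]
  linear_combination ν q * (fderiv ℝ f q X + fderiv ℝ g q Y) * hp

lemma exists_dual_frame (hXY : X 0 * Y 1 ≠ Y 0 * X 1) :
    ∃ ξ η : Fin 2 → ℝ, X ⬝ᵥ ξ = 1 ∧ Y ⬝ᵥ ξ = 0 ∧ X ⬝ᵥ η = 0 ∧ Y ⬝ᵥ η = 1 ∧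
      ∀ q : Fin 2 → ℝ, (ξ ⬝ᵥ q) • X + (η ⬝ᵥ q) • Y = q := by
  have hD : X 0 * Y 1 - Y 0 * X 1 ≠ 0 := sub_ne_zero.mpr hXY
  refine ⟨(X 0 * Y 1 - Y 0 * X 1)⁻¹ • ![Y 1, -Y 0], (X 0 * Y 1 - Y 0 * X 1)⁻¹ • ![-X 1, X 0],
    ?_, ?_, ?_, ?_, fun q => funext <| Fin.forall_fin_two.mpr ⟨?_, ?_⟩⟩
  all_goals
    simp only [vec2_dotProduct, Pi.add_apply, Pi.smul_apply, smul_eq_mul, cons_val_zero,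
      cons_val_one]
    field_simp
    ring

lemma null_equations_of_poisson_eq_zero (hXY : X 0 * Y 1 ≠ Y 0 * X 1)
    (hf : DifferentiableAt ℝ f q) (hg : DifferentiableAt ℝ g q) (hh : DifferentiableAt ℝ h q)
    (hν : DifferentiableAt ℝ ν q) (hν0 : ν q ≠ 0) (hW : DifferentiableAt ℝ W q)
    (hpoisson : ∀ p, (X ⬝ᵥ p) * (Y ⬝ᵥ p) = W q →
      poisson (frameMomentum X Y f g h) (conformallyFlatHam X Y ν W) q p = 0) :
    fderiv ℝ f q Y = 0 ∧ fderiv ℝ g q X = 0 ∧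
      (fderiv ℝ f q X + fderiv ℝ g q Y) * W q +
        (f q * fderiv ℝ W q X + g q * fderiv ℝ W q Y) = 0 := by
  obtain ⟨ξ, η, hXξ, hYξ, hXη, hYη, -⟩ := exists_dual_frame hXY
  refine quadratic_coeff_of_vanish_on_hyperbola (l := fderiv ℝ h q Y) (m := fderiv ℝ h q X)
    fun s t hst => ?_
  have hX : X ⬝ᵥ (s • ξ + t • η) = s := by simp [dotProduct_add, hXξ, hXη]
  have hY : Y ⬝ᵥ (s • ξ + t • η) = t := by simp [dotProduct_add, hYξ, hYη]
  have hlevel : (X ⬝ᵥ (s • ξ + t • η)) * (Y ⬝ᵥ (s • ξ + t • η)) = W q := by rwa [hX, hY]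
  have hbracket := hpoisson _ hlevel
  rw [poisson_frameMomentum_of_level_zero hf hg hh hν hW hlevel, hX, hY] at hbracket
  exact (mul_eq_zero_iff_left hν0).mp hbracket

lemma Nonresonant.frame_det_ne (hres : Nonresonant (α ⬝ᵥ X) (α ⬝ᵥ Y) (β ⬝ᵥ X) (β ⬝ᵥ Y)) :
    X 0 * Y 1 ≠ Y 0 * X 1 := by
  intro hXY
  apply hres.det_ne
  simp only [vec2_dotProduct]
  linear_combination (α 0 * β 1 - α 1 * β 0) * hXY

lemma hasFDerivAt_add_exp_dotProduct (A B : ℝ) (α β q : Fin 2 → ℝ) :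
    HasFDerivAt (fun q => A * exp (α ⬝ᵥ q) + B * exp (β ⬝ᵥ q))
      (LinearMap.toContinuousLinearMap
        (dotProductBilin ℝ ℝ ((A * exp (α ⬝ᵥ q)) • α + (B * exp (β ⬝ᵥ q)) • β))) q := by
  refine (((hasFDerivAt_dotProduct α q).exp.const_mul A).add
    ((hasFDerivAt_dotProduct β q).exp.const_mul B)).congr_fderiv ?_
  ext v
  simp [mul_assoc]

lemma Nonresonant.frame_components_eq_zero
    (hres : Nonresonant (α ⬝ᵥ X) (α ⬝ᵥ Y) (β ⬝ᵥ X) (β ⬝ᵥ Y)) (hA : A ≠ 0) (hB : B ≠ 0)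
    (hf : Differentiable ℝ f) (hg : Differentiable ℝ g) (hh : Differentiable ℝ h)
    (hν : Differentiable ℝ ν) (hν0 : ∀ q, ν q ≠ 0)
    (hpoisson : ∀ q p, (X ⬝ᵥ p) * (Y ⬝ᵥ p) = A * exp (α ⬝ᵥ q) + B * exp (β ⬝ᵥ q) →
      poisson (frameMomentum X Y f g h)
        (conformallyFlatHam X Y ν fun q => A * exp (α ⬝ᵥ q) + B * exp (β ⬝ᵥ q)) q p = 0) :
    f = 0 ∧ g = 0 := by
  have hnull (q : Fin 2 → ℝ) := null_equations_of_poisson_eq_zero hres.frame_det_ne (hf q) (hg q)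
    (hh q) (hν q) (hν0 q) (hasFDerivAt_add_exp_dotProduct A B α β q).differentiableAt (hpoisson q)
  have hfY (q : Fin 2 → ℝ) : fderiv ℝ f q Y = 0 := (hnull q).1
  have hgX (q : Fin 2 → ℝ) : fderiv ℝ g q X = 0 := (hnull q).2.1
  have hfx (x y : ℝ) : f (x • X + y • Y) = f (x • X) :=
    apply_add_smul_of_fderiv_eq_zero hf hfY _ y
  have hgy (x y : ℝ) : g (x • X + y • Y) = g (y • Y) := by
    rw [add_comm]
    exact apply_add_smul_of_fderiv_eq_zero hg hgX _ x
  have hdf (x y : ℝ) := hasDerivAt_comp_smul_of_fderiv_eq_zero hf hfY X x y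
  have hdg (x y : ℝ) := hasDerivAt_comp_smul_of_fderiv_eq_zero hg hgX Y y x
  obtain ⟨hf0, hg0⟩ := hres.eq_zero_of_div_eq_zero hA hB
    (fun x => (hdf x 0).differentiableAt) (fun y => (hdg 0 y).differentiableAt) fun x y => by
      have hdiv := (hnull (x • X + y • Y)).2.2
      rw [(hasFDerivAt_add_exp_dotProduct A B α β _).fderiv, hfx, hgy] at hdiv
      rw [(hdf x y).deriv, (hdg x y).deriv, add_comm (y • Y)]
      simp only [LinearMap.coe_toContinuousLinearMap', dotProductBilin_apply_apply, add_dotProduct,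
        smul_dotProduct, dotProduct_add, dotProduct_smul, smul_eq_mul] at hdiv
      simp only [mul_comm _ x, mul_comm _ y]
      linear_combination hdiv
  obtain ⟨ξ, η, -, -, -, -, hframe⟩ := exists_dual_frame hres.frame_det_ne
  refine ⟨funext fun q => ?_, funext fun q => ?_⟩
  · rw [← hframe q, hfx]
    exact congrFun hf0 _
  · rw [← hframe q, hgy]
    exact congrFun hg0 _

lemma Nonresonant.vectorField_eq_zero
    (hres : Nonresonant (α ⬝ᵥ X) (α ⬝ᵥ Y) (β ⬝ᵥ X) (β ⬝ᵥ Y)) (hA : A ≠ 0) (hB : B ≠ 0)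
    {F : (Fin 2 → ℝ) → Fin 2 → ℝ} (hF : Differentiable ℝ F) (hh : Differentiable ℝ h)
    (hν : Differentiable ℝ ν) (hν0 : ∀ q, ν q ≠ 0)
    (hpoisson : ∀ q p, (X ⬝ᵥ p) * (Y ⬝ᵥ p) = A * exp (α ⬝ᵥ q) + B * exp (β ⬝ᵥ q) →
      poisson (fun q p => F q ⬝ᵥ p + h q)
        (conformallyFlatHam X Y ν fun q => A * exp (α ⬝ᵥ q) + B * exp (β ⬝ᵥ q)) q p = 0) :
    F = 0 := by
  obtain ⟨ξ, η, -, -, -, -, hframe⟩ := exists_dual_frame hres.frame_det_ne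
  have hcomponent (ζ : Fin 2 → ℝ) : Differentiable ℝ fun q => ζ ⬝ᵥ F q :=
    fun q => ((hasFDerivAt_dotProduct ζ (F q)).comp q (hF q).hasFDerivAt).differentiableAt
  have hmomentum : (fun q p => F q ⬝ᵥ p + h q) =
      frameMomentum X Y (fun q => ξ ⬝ᵥ F q) (fun q => η ⬝ᵥ F q) h := by
    ext q p
    conv_lhs => rw [← hframe (F q)]
    simp only [frameMomentum, add_dotProduct, smul_dotProduct, smul_eq_mul]
  rw [hmomentum] at hpoisson
  obtain ⟨hξ, hη⟩ := hres.frame_components_eq_zero hA hB (hcomponent ξ) (hcomponent η) hh hν hν0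
    hpoisson
  funext q
  rw [← hframe (F q), congrFun hξ q, congrFun hη q]
  simp

end PoissonBracket

section CohomogeneityOne

open Matrix Real

/-- For `ε = ± 1`, the two null vectors of the quadratic form `Jform d1 d2`, normalized so that
`Jform` is the product of the two linear forms they define. The entries come from completing the
square: `J(p) = (p₁ + p₂)² / (n(n - 1)) - (d₁d₂ / n) (p₁ / d₁ - p₂ / d₂)²` with `n = d₁ + d₂`. -/
noncomputable def nullVector (d1 d2 : ℕ) (ε : ℝ) : Fin 2 → ℝ :=
  ![√(1 / ((d1 + d2) * (d1 + d2 - 1))) + ε * (√(d1 * d2 / (d1 + d2)) / d1),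
    √(1 / ((d1 + d2) * (d1 + d2 - 1))) - ε * (√(d1 * d2 / (d1 + d2)) / d2)]

variable {d1 d2 : ℕ}

lemma Jform_eq_mul_nullVector (hd1 : 0 < d1) (hd2 : 0 < d2) (p : Fin 2 → ℝ) :
    Jform d1 d2 p = (nullVector d1 d2 1 ⬝ᵥ p) * (nullVector d1 d2 (-1) ⬝ᵥ p) := by
  have h1 : (1 : ℝ) ≤ d1 := by exact_mod_cast hd1
  have h2 : (1 : ℝ) ≤ d2 := by exact_mod_cast hd2
  have hn : (0 : ℝ) < d1 + d2 - 1 := by linarith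
  have ha : √(1 / ((d1 + d2) * (d1 + d2 - 1) : ℝ)) ^ 2 = 1 / ((d1 + d2) * (d1 + d2 - 1)) :=
    sq_sqrt (by positivity)
  have hr : √(d1 * d2 / (d1 + d2) : ℝ) ^ 2 = d1 * d2 / (d1 + d2) := sq_sqrt (by positivity)
  calc Jform d1 d2 p = 1 / ((d1 + d2) * (d1 + d2 - 1)) * (p 0 + p 1) ^ 2 -
        d1 * d2 / (d1 + d2) * (p 0 / d1 - p 1 / d2) ^ 2 := by
        rw [Jform]
        field_simp
        ring
    _ = _ := by
        rw [← ha, ← hr, vec2_dotProduct, vec2_dotProduct]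
        simp only [nullVector, cons_val_zero, cons_val_one]
        ring

lemma nonresonant_add_sub {M ρ σ : ℝ} (hM : 0 < M) (hρ : 0 < ρ) (hρσ : ρ < σ) :
    Nonresonant (M + ρ) (M - ρ) (M + σ) (M - σ) where
  fst_ne h := by linarith
  snd_ne h := by linarith
  det_ne h := by nlinarith
  not_fst_double h := by linarith [h.1, h.2]
  not_snd_double h := by linarith [h.2]

lemma nonresonant_nullVector (hd1 : 0 < d1) (hd2 : 0 < d2) :
    Nonresonant (![(d1 : ℝ), d2 - 1] ⬝ᵥ nullVector d1 d2 1)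
      (![(d1 : ℝ), d2 - 1] ⬝ᵥ nullVector d1 d2 (-1))
      (![(d1 : ℝ) + 1, d2 - 2] ⬝ᵥ nullVector d1 d2 1)
      (![(d1 : ℝ) + 1, d2 - 2] ⬝ᵥ nullVector d1 d2 (-1)) := by
  have h1 : (1 : ℝ) ≤ d1 := by exact_mod_cast hd1
  have h2 : (1 : ℝ) ≤ d2 := by exact_mod_cast hd2
  have hn : (0 : ℝ) < d1 + d2 - 1 := by linarith
  have ha : 0 < √(1 / ((d1 + d2) * (d1 + d2 - 1) : ℝ)) := by positivity
  have hr : 0 < √(d1 * d2 / (d1 + d2) : ℝ) := by positivity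
  simp only [nullVector, vec2_dotProduct']
  generalize √(1 / ((d1 + d2) * (d1 + d2 - 1) : ℝ)) = a at ha ⊢
  generalize √(d1 * d2 / (d1 + d2) : ℝ) = r at hr ⊢
  have hρ : 0 < r / d2 := by positivity
  have hσ : 0 < r / d1 := by positivity
  convert nonresonant_add_sub (mul_pos hn ha) hρ
    (by linarith : r / d2 < r / d1 + 2 * (r / d2)) using 1
  all_goals
    field_simp
    ring

lemma vol_ne_zero (d1 d2 : ℕ) (q : Fin 2 → ℝ) : vol d1 d2 q ≠ 0 := exp_ne_zero _

lemma differentiable_vol (d1 d2 : ℕ) : Differentiable ℝ (vol d1 d2) := by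
  unfold vol
  fun_prop

lemma Ham_eq_conformallyFlatHam (hd1 : 0 < d1) (hd2 : 0 < d2) (S : (Fin 2 → ℝ) → ℝ) :
    Ham d1 d2 S = conformallyFlatHam (nullVector d1 d2 1) (nullVector d1 d2 (-1))
      (fun q => (vol d1 d2 q)⁻¹) (fun q => S q * vol d1 d2 q ^ 2) := by
  ext q p
  have hv := vol_ne_zero d1 d2 q
  rw [Ham, conformallyFlatHam, ← Jform_eq_mul_nullVector hd1 hd2]
  field_simp

lemma potential_mul_vol_sq (d1 d2 : ℕ) (A1 A2 : ℝ) (q : Fin 2 → ℝ) :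
    (A1 * exp (-(q 1)) - A2 * exp (q 0 - 2 * q 1)) * vol d1 d2 q ^ 2 =
      A1 * exp (![(d1 : ℝ), d2 - 1] ⬝ᵥ q) + -A2 * exp (![(d1 : ℝ) + 1, d2 - 2] ⬝ᵥ q) := by
  have hα : exp (![(d1 : ℝ), d2 - 1] ⬝ᵥ q) = exp (-(q 1)) * vol d1 d2 q ^ 2 := by
    rw [vol, ← exp_nat_mul, ← exp_add, vec2_dotProduct, cons_val_zero, cons_val_one]
    push_cast
    ring_nf
  have hβ : exp (![(d1 : ℝ) + 1, d2 - 2] ⬝ᵥ q) = exp (q 0 - 2 * q 1) * vol d1 d2 q ^ 2 := by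
    rw [vol, ← exp_nat_mul, ← exp_add, vec2_dotProduct, cons_val_zero, cons_val_one]
    push_cast
    ring_nf
  rw [hα, hβ]
  ring

end CohomogeneityOne

theorem no_linear_first_integral_case_ii_general
    (d1 d2 : ℕ) (hd1pos : 0 < d1) (hd2pos : 0 < d2)
    (A1 A2 : ℝ) (hA1 : A1 ≠ 0) (hA2 : A2 ≠ 0)
    (S : (Fin 2 → ℝ) → ℝ)
    (hS : S = fun q => A1 * Real.exp (-(q 1)) - A2 * Real.exp (q 0 - 2 * q 1)) :
    ¬ ∃ F1 F2 F0 : (Fin 2 → ℝ) → ℝ,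
      Differentiable ℝ F1 ∧ Differentiable ℝ F2 ∧ Differentiable ℝ F0 ∧
      (F1 ≠ 0 ∨ F2 ≠ 0) ∧
      ∀ q p : Fin 2 → ℝ, Ham d1 d2 S q p = 0 →
        poisson (fun q' p' => F1 q' * p' 0 + F2 q' * p' 1 + F0 q') (Ham d1 d2 S) q p = 0 := by
  rintro ⟨F1, F2, F0, hF1, hF2, hF0, hne, hpoisson⟩
  have hfield : Differentiable ℝ fun q => ![F1 q, F2 q] :=
    differentiable_pi.mpr (Fin.forall_fin_two.mpr ⟨hF1, hF2⟩)
  have hνdiff : Differentiable ℝ fun q => (vol d1 d2 q)⁻¹ :=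
    (differentiable_vol d1 d2).inv (vol_ne_zero d1 d2)
  simp only [Ham_eq_conformallyFlatHam hd1pos hd2pos, hS, potential_mul_vol_sq] at hpoisson
  have hzero := (nonresonant_nullVector hd1pos hd2pos).vectorField_eq_zero hA1
    (neg_ne_zero.mpr hA2) hfield hF0 hνdiff (fun q => inv_ne_zero (vol_ne_zero d1 d2 q))
    fun q p hp => by
      simpa only [Matrix.vec2_dotProduct, Matrix.cons_val_zero, Matrix.cons_val_one] using
        hpoisson q p (by rw [conformallyFlatHam, hp, sub_self, mul_zero])
  exact hne.elim (fun h => h (funext fun q => congrFun (congrFun hzero q) 0))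
    fun h => h (funext fun q => congrFun (congrFun hzero q) 1)

/-- Dancer–Wang: for `S(q) = A₁e^{−q₂} − A₂e^{q₁−2q₂}`, there is no nontrivial first
integral linear in momenta on `V_H`. -/
theorem no_linear_first_integral_case_ii
    (d1 d2 : ℕ) (hd1pos : 0 < d1) (hd2pos : 0 < d2)
    (A1 A2 : ℝ) (hA1 : 0 < A1) (hA2 : 0 < A2)
    (S : (Fin 2 → ℝ) → ℝ)
    (hS : S = fun q => A1 * Real.exp (-(q 1)) - A2 * Real.exp (q 0 - 2 * q 1)) :
    ¬ ∃ F1 F2 F0 : (Fin 2 → ℝ) → ℝ,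
      ContDiff ℝ 1 F1 ∧ ContDiff ℝ 1 F2 ∧ ContDiff ℝ 1 F0 ∧
      (F1 ≠ 0 ∨ F2 ≠ 0) ∧
      ∀ q p : Fin 2 → ℝ, Ham d1 d2 S q p = 0 →
        poisson (fun q' p' => F1 q' * p' 0 + F2 q' * p' 1 + F0 q') (Ham d1 d2 S) q p = 0 := by
  rintro ⟨F1, F2, F0, hF1, hF2, hF0, h⟩
  exact no_linear_first_integral_case_ii_general d1 d2 hd1pos hd2pos A1 A2 hA1.ne' hA2.ne' S hS
    ⟨F1, F2, F0, hF1.differentiable one_ne_zero, hF2.differentiable one_ne_zero,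
      hF0.differentiable one_ne_zero, h⟩
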